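/- For every natural number m, the predicate on pairs (V, V′) of m×m integer matrices asserting 'V and V′ are symmetric, unimodular, and congruent over ℤ' is decidable in the computability-theoretic sense: it is a ComputablePred with respect to the canonical encoding of integer matrices. That is, there exists an algorithm that takes as input two integral, symmetric, unimodular matrices and outputs whether or not they are congruent over ℤ. -/

import Mathlib

open Matrix

/-!
There are only finitely many congruence classes of symmetric integer matrices of given nonzero
determinant. Take a representative with a diagonal entry `a` of minimal absolute value; Hermite's
inequality bounds `a`. If `a ≠ 0`, induct on the Schur complement of `a`. If `a = 0`, Euclid's
algorithm turns the row of `a` into `(0, g, 0, …, 0)` with `g ^ 2` dividing the determinant, and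
induction applies to the complement of the first two basis vectors. In both cases rounding by
unipotent congruences bounds the remaining entries.

Congruence is recursively enumerable. So is noncongruence: fix a finite set of representatives of
the classes, and search for congruences of the two matrices to the members of one of the
noncongruent pairs of representatives. The table of those pairs exists because it is finite; no
procedure computing it is needed.
-/

section Congruence

variable {ι κ R : Type*} [Fintype ι] [DecidableEq ι] [Fintype κ] [DecidableEq κ] [CommRing R]

/-- Congruence of square matrices over `R`, i.e. isometry of the bilinear forms on `ι → R` that they
represent. -/
def IsCongruent (A B : Matrix ι ι R) : Prop :=
  ∃ P : Matrix ι ι R, IsUnit P.det ∧ B = Pᵀ * A * P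

namespace IsCongruent

theorem refl (A : Matrix ι ι R) : IsCongruent A A :=
  ⟨1, by simp, by simp⟩

theorem symm {A B : Matrix ι ι R} (h : IsCongruent A B) : IsCongruent B A := by
  obtain ⟨P, hP, rfl⟩ := h
  have hPinv : P * P⁻¹ = 1 := mul_nonsing_inv P hP
  refine ⟨P⁻¹, by rwa [isUnit_nonsing_inv_det_iff], ?_⟩
  calc A = (P * P⁻¹)ᵀ * A * (P * P⁻¹) := by simp [hPinv]
    _ = (P⁻¹)ᵀ * (Pᵀ * A * P) * P⁻¹ := by simp only [transpose_mul, Matrix.mul_assoc]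

theorem trans {A B C : Matrix ι ι R} (hAB : IsCongruent A B) (hBC : IsCongruent B C) :
    IsCongruent A C := by
  obtain ⟨P, hP, rfl⟩ := hAB
  obtain ⟨Q, hQ, rfl⟩ := hBC
  exact ⟨P * Q, by simpa using hP.mul hQ, by simp only [transpose_mul, Matrix.mul_assoc]⟩

theorem equivalence : Equivalence (IsCongruent : Matrix ι ι R → Matrix ι ι R → Prop) :=
  ⟨refl, symm, trans⟩

theorem isSymm {A B : Matrix ι ι R} (h : IsCongruent A B) (hA : A.IsSymm) : B.IsSymm := by
  obtain ⟨P, -, rfl⟩ := h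
  simp only [IsSymm, transpose_mul, transpose_transpose, hA.eq, Matrix.mul_assoc]

theorem submatrix {A B : Matrix ι ι R} (h : IsCongruent A B) (e : κ ≃ ι) :
    IsCongruent (A.submatrix e e) (B.submatrix e e) := by
  obtain ⟨P, hP, rfl⟩ := h
  refine ⟨P.submatrix e e, by rwa [det_submatrix_equiv_self], ?_⟩
  rw [transpose_submatrix, submatrix_mul_equiv, submatrix_mul_equiv]

theorem det_eq {A B : Matrix ι ι ℤ} (h : IsCongruent A B) : B.det = A.det := by
  obtain ⟨P, hP, rfl⟩ := h
  calc (Pᵀ * A * P).det = P.det * P.det * A.det := by simp only [det_mul, det_transpose]; ring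
    _ = A.det := by rw [Int.isUnit_mul_self hP, one_mul]

end IsCongruent

end Congruence

section Bordered

variable {ι κ R : Type*} [CommRing R]

/-- The symmetric bordering of `C` by the corner entry `a` and the row and column `b`. -/
def bordered (a : R) (b : κ → R) (C : Matrix κ κ R) : Matrix (Unit ⊕ κ) (Unit ⊕ κ) R :=
  fromBlocks (a • (1 : Matrix Unit Unit R)) (replicateRow Unit b) (replicateCol Unit b) C

/-- The Schur complement of the corner `a` of `bordered a b C`, multiplied by `a` so that it is
defined over any ring. -/
def scaledSchur (a : R) (b : κ → R) (C : Matrix κ κ R) : Matrix κ κ R :=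
  a • C - vecMulVec b b

theorem scaledSchur_apply (a : R) (b : κ → R) (C : Matrix κ κ R) (i j : κ) :
    scaledSchur a b C i j = a * C i j - b i * b j :=
  rfl

@[simp]
theorem bordered_inl_inl (a : R) (b : κ → R) (C : Matrix κ κ R) (u v : Unit) :
    bordered a b C (.inl u) (.inl v) = a := by
  simp [bordered]

@[simp]
theorem bordered_inl_inr (a : R) (b : κ → R) (C : Matrix κ κ R) (u : Unit) (j : κ) :
    bordered a b C (.inl u) (.inr j) = b j :=
  rfl

@[simp]
theorem bordered_inr_inl (a : R) (b : κ → R) (C : Matrix κ κ R) (i : κ) (v : Unit) :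
    bordered a b C (.inr i) (.inl v) = b i :=
  rfl

@[simp]
theorem bordered_inr_inr (a : R) (b : κ → R) (C : Matrix κ κ R) (i j : κ) :
    bordered a b C (.inr i) (.inr j) = C i j :=
  rfl

theorem isSymm_scaledSchur (a : R) (b : κ → R) {C : Matrix κ κ R} (hC : C.IsSymm) :
    (scaledSchur a b C).IsSymm := by
  simp only [IsSymm, scaledSchur, transpose_sub, transpose_smul, transpose_vecMulVec, hC.eq]

theorem scaledSchur_vecMul [Fintype κ] (a : R) (b : κ → R) (C P : Matrix κ κ R) :
    scaledSchur a (b ᵥ* P) (Pᵀ * C * P) = Pᵀ * scaledSchur a b C * P := by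
  simp only [scaledSchur, Matrix.mul_sub, Matrix.sub_mul, Matrix.mul_smul, Matrix.smul_mul,
    mul_vecMulVec, vecMulVec_mul, mulVec_transpose]

theorem scaledSchur_add_smul (a : R) (b t : κ → R) (C : Matrix κ κ R) :
    scaledSchur a (b + a • t) (C + vecMulVec b t + vecMulVec t b + a • vecMulVec t t) =
      scaledSchur a b C := by
  ext i j
  simp only [scaledSchur, smul_add, Matrix.sub_apply, Matrix.add_apply, Matrix.smul_apply,
    smul_eq_mul, vecMulVec_apply, Pi.add_apply, Pi.smul_apply]
  ring

theorem eq_bordered {A : Matrix (Unit ⊕ κ) (Unit ⊕ κ) R} (hA : A.IsSymm) :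
    A = bordered (A (.inl ()) (.inl ())) (fun k => A (.inl ()) (.inr k))
      (A.submatrix .inr .inr) := by
  ext (_ | j) (_ | k) <;> simp [hA.apply (.inl ())]

theorem exists_submatrix_eq_bordered [Fintype ι] [Fintype κ] {A : Matrix ι ι R} (hA : A.IsSymm)
    (i : ι) (hcard : Fintype.card ι = Fintype.card κ + 1) :
    ∃ (e : Unit ⊕ κ ≃ ι) (b : κ → R) (C : Matrix κ κ R),
      C.IsSymm ∧ A.submatrix e e = bordered (A i i) b C := by
  classical
  let e₀ : Unit ⊕ κ ≃ ι := Fintype.equivOfCardEq (by simp [hcard, add_comm])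
  let e : Unit ⊕ κ ≃ ι := e₀.trans (Equiv.swap (e₀ (.inl ())) i)
  have he : e (.inl ()) = i := by simp [e]
  have hsplit := eq_bordered (hA.submatrix e)
  rw [submatrix_apply, he] at hsplit
  exact ⟨e, _, _, (hA.submatrix e).submatrix _, hsplit⟩

variable [Fintype κ] [DecidableEq κ]

theorem isCongruent_bordered_vecMul (a : R) (b : κ → R) (C : Matrix κ κ R) {P : Matrix κ κ R}
    (hP : IsUnit P.det) :
    IsCongruent (bordered a b C) (bordered a (b ᵥ* P) (Pᵀ * C * P)) := by
  refine ⟨fromBlocks 1 0 0 P, by simpa [det_fromBlocks_zero₂₁] using hP, ?_⟩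
  simp [bordered, fromBlocks_transpose, fromBlocks_multiply, replicateRow_vecMul,
    ← transpose_replicateRow]

theorem isCongruent_bordered_add_smul (a : R) (b t : κ → R) (C : Matrix κ κ R) :
    IsCongruent (bordered a b C) (bordered a (b + a • t)
      (C + vecMulVec b t + vecMulVec t b + a • vecMulVec t t)) := by
  refine ⟨fromBlocks 1 (replicateRow Unit t) 0 1, by simp, ?_⟩
  simp only [bordered, fromBlocks_transpose, fromBlocks_multiply, vecMulVec_eq Unit]
  congr 1
  · simp
  · ext; simp [add_comm]
  · ext; simp [add_comm]
  · simp only [transpose_replicateRow, Matrix.mul_smul, Matrix.smul_mul, Matrix.mul_one,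
      transpose_one, Matrix.one_mul, Matrix.add_mul]
    abel

theorem det_bordered_mul_pow (a : R) (b : κ → R) (C : Matrix κ κ R) :
    (bordered a b C).det * a ^ Fintype.card κ = a * (scaledSchur a b C).det := by
  have hmul : bordered a b C * fromBlocks 1 (-replicateRow Unit b) 0 (a • 1) =
      fromBlocks (a • (1 : Matrix Unit Unit R)) 0 (replicateCol Unit b) (scaledSchur a b C) := by
    simp [bordered, fromBlocks_multiply, scaledSchur, vecMulVec_eq Unit, neg_add_eq_sub]
  simpa [det_fromBlocks_zero₂₁, det_fromBlocks_zero₁₂] using congrArg det hmul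

theorem det_bordered_zero_bordered (g c : R) (u : κ → R) (E : Matrix κ κ R) :
    (bordered 0 (Pi.single (.inl ()) g) (bordered c u E)).det = -(g ^ 2 * E.det) := by
  let M := bordered 0 (Pi.single (.inl ()) g) (bordered c u E)
  have hswap : M.submatrix (Equiv.swap (.inl ()) (.inr (.inl ()))) id =
      fromBlocks (g • (1 : Matrix Unit Unit R)) (fromCols (c • 1) (replicateRow Unit u)) 0
        (fromBlocks (g • (1 : Matrix Unit Unit R)) 0 (replicateCol Unit u) E) := by
    ext (_ | _ | i) (_ | _ | j) <;> simp [M, Equiv.swap_apply_of_ne_of_ne]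
  have hdet := det_permute (Equiv.swap (.inl ()) (.inr (.inl ()))) M
  have hneg : g * (g * E.det) = -M.det := by
    simpa [hswap, det_fromBlocks_zero₂₁, det_fromBlocks_zero₁₂] using hdet
  linear_combination hneg

theorem isCongruent_bordered_zero_bordered_vecMul (g c : R) (u : κ → R) (E : Matrix κ κ R)
    {Q : Matrix κ κ R} (hQ : IsUnit Q.det) :
    IsCongruent (bordered 0 (Pi.single (.inl ()) g) (bordered c u E))
      (bordered 0 (Pi.single (.inl ()) g) (bordered c (u ᵥ* Q) (Qᵀ * E * Q))) := by
  let P : Matrix (Unit ⊕ κ) (Unit ⊕ κ) R := fromBlocks 1 0 0 Q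
  have hsingle : Pi.single (.inl ()) g ᵥ* P = Pi.single (.inl ()) g := by
    ext (_ | k) <;> simp [P, single_vecMul]
  have hblock : Pᵀ * bordered c u E * P = bordered c (u ᵥ* Q) (Qᵀ * E * Q) := by
    simp [P, bordered, fromBlocks_transpose, fromBlocks_multiply, replicateRow_vecMul,
      ← transpose_replicateRow]
  simpa only [hsingle, hblock] using isCongruent_bordered_vecMul 0 (Pi.single (.inl ()) g)
    (bordered c u E) (P := P) (by simpa [P] using hQ)

theorem isCongruent_bordered_zero_bordered_add (g c s : R) (u t : κ → R) (E : Matrix κ κ R) :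
    IsCongruent (bordered 0 (Pi.single (.inl ()) g) (bordered c u E))
      (bordered 0 (Pi.single (.inl ()) g) (bordered (c + 2 * g * s) (u + g • t) E)) := by
  convert isCongruent_bordered_add_smul 0 (Pi.single (.inl ()) g) (Sum.elim (fun _ => s) t)
    (bordered c u E) using 2
  · simp
  · ext (_ | i) (_ | j)
    · simp only [bordered_inl_inl, zero_smul, Matrix.add_apply, Matrix.zero_apply,
        vecMulVec_apply, Pi.single_eq_same, Sum.elim_inl]
      ring
    all_goals simp [vecMulVec_apply, mul_comm g]

end Bordered

section EuclideanDomain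

variable {ι R : Type*} [Fintype ι] [DecidableEq ι]

theorem vecMul_transvection [CommRing R] (b : ι → R) (i j : ι) (c : R) :
    b ᵥ* transvection i j c = Function.update b j (b j + c * b i) := by
  ext k
  rw [transvection, vecMul_add, vecMul_one, Pi.add_apply]
  rcases eq_or_ne k j with rfl | hk
  · simp [vecMul, dotProduct, single_apply, mul_comm]
  · simp [vecMul, dotProduct, hk, hk.symm]

variable [EuclideanDomain R]

theorem exists_vecMul_apply_eq_zero (b : ι → R) {i j : ι} (hij : i ≠ j) :
    ∃ P : Matrix ι ι R, IsUnit P.det ∧ (b ᵥ* P) i = 0 ∧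
      ∀ k, k ≠ i → k ≠ j → (b ᵥ* P) k = b k := by
  suffices H : ∀ x y : R, ∀ (b : ι → R) (i j : ι), i ≠ j → b i = x → b j = y →
      ∃ P : Matrix ι ι R, IsUnit P.det ∧ (b ᵥ* P) i = 0 ∧
        ∀ k, k ≠ i → k ≠ j → (b ᵥ* P) k = b k from
    H _ _ b i j hij rfl rfl
  intro x y
  induction x, y using EuclideanDomain.GCD.induction with
  | H0 y =>
    intro b i j _ hi _
    exact ⟨1, by simp, by simpa using hi, by simp⟩
  | H1 x y hx ih =>
    rintro b i j hij rfl rfl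
    let T := transvection i j (-(b j / b i))
    have hT : ∀ k, k ≠ j → (b ᵥ* T) k = b k := fun k hk => by
      rw [vecMul_transvection, Function.update_of_ne hk]
    have hTj : (b ᵥ* T) j = b j % b i := by
      rw [vecMul_transvection, Function.update_self, EuclideanDomain.mod_eq_sub_mul_div]
      ring
    obtain ⟨P, hP, hPj, hPk⟩ := ih (b ᵥ* T) j i hij.symm hTj (hT i hij)
    let σ := Equiv.swap i j
    have hσ : ∀ k, (b ᵥ* (T * P).submatrix id σ) k = (b ᵥ* T ᵥ* P) (σ k) := fun k => by
      rw [vecMul_vecMul]; rfl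
    refine ⟨(T * P).submatrix id σ, ?_, ?_, fun k hki hkj => ?_⟩
    · rw [det_permute', det_mul, det_transvection_of_ne _ _ hij, one_mul]
      exact (σ.sign.isUnit.map (Int.castRingHom R)).mul hP
    · rw [hσ, Equiv.swap_apply_left, hPj]
    · rw [hσ, Equiv.swap_apply_of_ne_of_ne hki hkj, hPk k hkj hki, hT k hkj]

theorem exists_vecMul_eq_single (b : ι → R) (i : ι) :
    ∃ (P : Matrix ι ι R) (g : R), IsUnit P.det ∧ b ᵥ* P = Pi.single i g := by
  suffices H : ∀ s : Finset ι, i ∉ s →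
      ∃ P : Matrix ι ι R, IsUnit P.det ∧ ∀ k ∈ s, (b ᵥ* P) k = 0 by
    obtain ⟨P, hP, hzero⟩ := H (Finset.univ.erase i) (Finset.notMem_erase i _)
    refine ⟨P, (b ᵥ* P) i, hP, funext fun k => ?_⟩
    by_cases hk : k = i
    · subst hk; simp
    · simp [hk, hzero k (by simp [hk])]
  intro s
  induction s using Finset.induction_on with
  | empty => exact fun _ => ⟨1, by simp, by simp⟩
  | insert j s hj ih =>
    intro hi
    obtain ⟨hij, his⟩ : i ≠ j ∧ i ∉ s := by simpa using hi
    obtain ⟨P, hP, hzero⟩ := ih his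
    obtain ⟨Q, hQ, hQj, hQk⟩ := exists_vecMul_apply_eq_zero (b ᵥ* P) hij.symm
    refine ⟨P * Q, by simpa using hP.mul hQ, fun k hk => ?_⟩
    rw [← vecMul_vecMul]
    rcases Finset.mem_insert.1 hk with rfl | hks
    · exact hQj
    · rw [hQk k (ne_of_mem_of_not_mem hks hj) (ne_of_mem_of_not_mem hks his), hzero k hks]

end EuclideanDomain

theorem exists_two_mul_abs_add_mul_le {a : ℤ} (ha : a ≠ 0) (b : ℤ) :
    ∃ t : ℤ, 2 * |b + a * t| ≤ |a| := by
  have hpos : 0 < a.natAbs := Int.natAbs_pos.2 ha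
  obtain ⟨t, ht⟩ : a ∣ b.bmod a.natAbs - b :=
    Int.natAbs_dvd.1 ⟨-b.bdiv a.natAbs, by rw [Int.bmod_eq_self_sub_mul_bdiv]; ring⟩
  refine ⟨t, ?_⟩
  have hlower := Int.le_bmod (x := b) hpos
  have hupper := Int.bmod_lt (x := b) hpos
  rw [← ht, Int.abs_eq_natAbs, Int.abs_eq_natAbs]
  omega

section Hermite

theorem three_mul_sq_le_four_mul_abs_scaledSchur {κ : Type*} {a : ℤ} {b : κ → ℤ}
    {C : Matrix κ κ ℤ} {j : κ} (haC : |a| ≤ |C j j|) (hb : 2 * |b j| ≤ |a|) :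
    3 * a ^ 2 ≤ 4 * |scaledSchur a b C j j| := by
  have hsub : |a| * |C j j| - |b j| ^ 2 ≤ |scaledSchur a b C j j| := by
    rw [scaledSchur_apply, ← abs_mul, sq, ← abs_mul]
    exact abs_sub_abs_le_abs_sub _ _
  rw [← sq_abs a]
  nlinarith [abs_nonneg a, abs_nonneg (b j)]

variable {ι κ : Type*} [Fintype ι] [DecidableEq ι] [Fintype κ] [DecidableEq κ]

theorem exists_isCongruent_min_abs_diag [Nonempty ι] (A : Matrix ι ι ℤ) :
    ∃ B, IsCongruent A B ∧ ∃ i, ∀ B', IsCongruent A B' → ∀ j, |B i i| ≤ |B' j j| := by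
  obtain ⟨⟨B, i⟩, hB, hmin⟩ := exists_minimalFor_of_wellFoundedLT
    (fun p : Matrix ι ι ℤ × ι => IsCongruent A p.1) (fun p => (p.1 p.2 p.2).natAbs)
    ⟨(A, Classical.arbitrary ι), .refl A⟩
  refine ⟨B, hB, i, fun B' hB' j => ?_⟩
  rw [Int.abs_eq_natAbs, Int.abs_eq_natAbs, Int.ofNat_le]
  exact le_of_not_gt fun hlt => hlt.not_ge (hmin (j := (B', j)) hB' hlt.le)

theorem exists_isCongruent_bordered_of_scaledSchur {a : ℤ} (ha : a ≠ 0) (b : κ → ℤ)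
    (C : Matrix κ κ ℤ) {S : Matrix κ κ ℤ} (hS : IsCongruent (scaledSchur a b C) S) :
    ∃ b' C', IsCongruent (bordered a b C) (bordered a b' C') ∧ scaledSchur a b' C' = S ∧
      ∀ j, 2 * |b' j| ≤ |a| := by
  obtain ⟨P, hP, rfl⟩ := hS
  choose t ht using fun j => exists_two_mul_abs_add_mul_le ha ((b ᵥ* P) j)
  exact ⟨_, _, (isCongruent_bordered_vecMul a b C hP).trans (isCongruent_bordered_add_smul a _ t _),
    by rw [scaledSchur_add_smul, scaledSchur_vecMul], ht⟩

theorem three_pow_mul_abs_pow_le_of_scaledSchur {a s : ℤ} {b : κ → ℤ} {C : Matrix κ κ ℤ} {c : ℕ}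
    (ha : a ≠ 0) (has : 3 * a ^ 2 ≤ 4 * s)
    (hs : 3 ^ c * s ^ Fintype.card κ ≤ 4 ^ c * |(scaledSchur a b C).det|) :
    3 ^ (Fintype.card κ + c) * |a| ^ (Fintype.card κ + 1) ≤
      4 ^ (Fintype.card κ + c) * |(bordered a b C).det| := by
  set k := Fintype.card κ
  have hdet : |(bordered a b C).det| * |a| ^ k = |a| * |(scaledSchur a b C).det| := by
    rw [← abs_pow, ← abs_mul, ← abs_mul, det_bordered_mul_pow]
  refine le_of_mul_le_mul_right ?_ (pow_pos (abs_pos.2 ha) k)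
  calc 3 ^ (k + c) * |a| ^ (k + 1) * |a| ^ k = |a| * 3 ^ c * (3 * |a| ^ 2) ^ k := by ring
    _ ≤ |a| * 3 ^ c * (4 * s) ^ k := by rw [sq_abs]; gcongr
    _ = |a| * 4 ^ k * (3 ^ c * s ^ k) := by ring
    _ ≤ |a| * 4 ^ k * (4 ^ c * |(scaledSchur a b C).det|) := by gcongr
    _ = 4 ^ (k + c) * (|(bordered a b C).det| * |a| ^ k) := by rw [hdet]; ring
    _ = 4 ^ (k + c) * |(bordered a b C).det| * |a| ^ k := by ring

/-- Hermite's inequality `|a| ≤ (4/3) ^ ((N - 1) / 2) * |det A| ^ (1 / N)` in dimension `N = n + 1`,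
cleared of roots. -/
theorem exists_isCongruent_three_pow_mul_abs_diag_pow_le {n : ℕ}
    {A : Matrix (Fin (n + 1)) (Fin (n + 1)) ℤ} (hA : A.IsSymm) :
    ∃ B, IsCongruent A B ∧ ∃ i,
      3 ^ (n + 1).choose 2 * |B i i| ^ (n + 1) ≤ 4 ^ (n + 1).choose 2 * |A.det| := by
  induction n with
  | zero => exact ⟨A, .refl A, 0, by simp⟩
  | succ n ih =>
    obtain ⟨B, hAB, i, hmin⟩ := exists_isCongruent_min_abs_diag A
    refine ⟨B, hAB, i, ?_⟩
    rcases eq_or_ne (B i i) 0 with hBi | hBi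
    · simp [hBi]
    obtain ⟨e, b, C, hC, he⟩ :=
      exists_submatrix_eq_bordered (κ := Fin (n + 1)) (hAB.isSymm hA) i (by simp)
    obtain ⟨S, hS, j, hj⟩ := ih (isSymm_scaledSchur (B i i) b hC)
    obtain ⟨b', C', hC', rfl, hb'⟩ := exists_isCongruent_bordered_of_scaledSchur hBi b C hS
    have hBC' : IsCongruent B ((bordered (B i i) b' C').submatrix e.symm e.symm) := by
      simpa [← he] using hC'.submatrix e.symm
    have hle : |B i i| ≤ |C' j j| := by
      simpa using hmin _ (hAB.trans hBC') (e (.inr j))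
    have hdet : (bordered (B i i) b' C').det = A.det := by
      rw [← hAB.det_eq, ← hBC'.det_eq, det_submatrix_equiv_self]
    rw [← hS.det_eq] at hj
    have hchoose : (n + 1 + 1).choose 2 = n + 1 + (n + 1).choose 2 := by
      rw [Nat.choose_succ_succ' (n + 1) 1, Nat.choose_one_right]
    have hbound := three_pow_mul_abs_pow_le_of_scaledSchur hBi
      (three_mul_sq_le_four_mul_abs_scaledSchur hle (hb' j)) (by rwa [Fintype.card_fin])
    rwa [Fintype.card_fin, ← hchoose, hdet] at hbound

theorem exists_isCongruent_abs_diag_le {n : ℕ} {A : Matrix (Fin (n + 1)) (Fin (n + 1)) ℤ}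
    (hA : A.IsSymm) :
    ∃ B, IsCongruent A B ∧ ∃ i, |B i i| ≤ 4 ^ (n + 1).choose 2 * |A.det| := by
  obtain ⟨B, hAB, i, hBi⟩ := exists_isCongruent_three_pow_mul_abs_diag_pow_le hA
  refine ⟨B, hAB, i, ?_⟩
  rcases eq_or_ne (B i i) 0 with hzero | hne
  · rw [hzero, abs_zero]
    positivity
  calc |B i i| ≤ |B i i| ^ (n + 1) := le_self_pow₀ (Int.one_le_abs hne) n.succ_ne_zero
    _ ≤ 3 ^ (n + 1).choose 2 * |B i i| ^ (n + 1) :=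
      le_mul_of_one_le_left (by positivity) (one_le_pow₀ (by norm_num))
    _ ≤ _ := hBi

end Hermite

section ReducedForm

variable {ι κ : Type*} [Fintype ι] [DecidableEq ι] [Fintype κ] [DecidableEq κ]

/-- The congruence class of `A` has a representative with entries bounded by `N`; such
representatives of the classes under consideration form a finite set. -/
def HasReducedForm (N : ℤ) (A : Matrix ι ι ℤ) : Prop :=
  ∃ B, IsCongruent A B ∧ ∀ i j, |B i j| ≤ N

namespace HasReducedForm

theorem mono {N N' : ℤ} {A : Matrix ι ι ℤ} (hN : N ≤ N') (h : HasReducedForm N A) :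
    HasReducedForm N' A :=
  let ⟨B, hAB, hB⟩ := h
  ⟨B, hAB, fun i j => (hB i j).trans hN⟩

theorem of_isCongruent {N : ℤ} {A B : Matrix ι ι ℤ} (hAB : IsCongruent A B)
    (hB : HasReducedForm N B) : HasReducedForm N A :=
  let ⟨C, hBC, hC⟩ := hB
  ⟨C, hAB.trans hBC, hC⟩

theorem of_submatrix {N : ℤ} {A : Matrix ι ι ℤ} (e : κ ≃ ι)
    (h : HasReducedForm N (A.submatrix e e)) : HasReducedForm N A :=
  let ⟨B, hAB, hB⟩ := h
  ⟨B.submatrix e.symm e.symm, by simpa using hAB.submatrix e.symm, fun _ _ => hB _ _⟩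

end HasReducedForm

/-- Every nondegenerate symmetric `n × n` matrix of determinant at most `D` in absolute value is
congruent to one with entries bounded by `N`. -/
def IsReductionBound (n : ℕ) (D N : ℤ) : Prop :=
  ∀ A : Matrix (Fin n) (Fin n) ℤ, A.IsSymm → A.det ≠ 0 → |A.det| ≤ D → HasReducedForm N A

theorem IsReductionBound.hasReducedForm {D N : ℤ} (h : IsReductionBound (Fintype.card ι) D N)
    {A : Matrix ι ι ℤ} (hA : A.IsSymm) (hdet : A.det ≠ 0) (hD : |A.det| ≤ D) :
    HasReducedForm N A := by
  let e := (Fintype.equivFin ι).symm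
  have hdete : (A.submatrix e e).det = A.det := det_submatrix_equiv_self e A
  exact .of_submatrix e (h _ (hA.submatrix e) (by rwa [hdete]) (by rwa [hdete]))

theorem abs_det_scaledSchur_le {a : ℤ} (ha : a ≠ 0) (b : κ → ℤ) (C : Matrix κ κ ℤ) :
    |(scaledSchur a b C).det| ≤ |(bordered a b C).det| * |a| ^ Fintype.card κ := by
  rw [← abs_pow, ← abs_mul, det_bordered_mul_pow, abs_mul]
  exact le_mul_of_one_le_left (abs_nonneg _) (Int.one_le_abs ha)

theorem abs_apply_le_of_scaledSchur {κ : Type*} {a m N : ℤ} {b : κ → ℤ} {C : Matrix κ κ ℤ}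
    (ha : a ≠ 0) (hb : ∀ j, |b j| ≤ m) {i j : κ} (hS : |scaledSchur a b C i j| ≤ N) :
    |C i j| ≤ N + m ^ 2 :=
  calc |C i j| ≤ |a| * |C i j| := le_mul_of_one_le_left (abs_nonneg _) (Int.one_le_abs ha)
    _ = |scaledSchur a b C i j + b i * b j| := by rw [scaledSchur_apply, sub_add_cancel, abs_mul]
    _ ≤ |scaledSchur a b C i j| + |b i| * |b j| := by rw [← abs_mul]; exact abs_add_le _ _
    _ ≤ N + m * m :=
      add_le_add hS (mul_le_mul (hb i) (hb j) (abs_nonneg _) ((abs_nonneg _).trans (hb i)))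
    _ = N + m ^ 2 := by rw [sq]

theorem hasReducedForm_bordered {D m N a : ℤ} {b : κ → ℤ} {C : Matrix κ κ ℤ}
    (hN : IsReductionBound (Fintype.card κ) (D * m ^ Fintype.card κ) N) (hC : C.IsSymm)
    (ha : a ≠ 0) (ham : |a| ≤ m) (hdet : (bordered a b C).det ≠ 0)
    (hD : |(bordered a b C).det| ≤ D) :
    HasReducedForm (max m (N + m ^ 2)) (bordered a b C) := by
  have hSdet : (scaledSchur a b C).det ≠ 0 := by
    refine right_ne_zero_of_mul (a := a) ?_
    rw [← det_bordered_mul_pow]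
    exact mul_ne_zero hdet (pow_ne_zero _ ha)
  have hSD : |(scaledSchur a b C).det| ≤ D * m ^ Fintype.card κ :=
    (abs_det_scaledSchur_le ha b C).trans <|
      mul_le_mul hD (by gcongr) (by positivity) ((abs_nonneg _).trans hD)
  obtain ⟨S, hS, hSN⟩ := hN.hasReducedForm (isSymm_scaledSchur a b hC) hSdet hSD
  obtain ⟨b', C', hC', rfl, hb'⟩ := exists_isCongruent_bordered_of_scaledSchur ha b C hS
  have hb'm : ∀ j, |b' j| ≤ m := fun j => by linarith [hb' j, abs_nonneg (b' j)]
  have hC'N : ∀ i j, |C' i j| ≤ N + m ^ 2 := fun i j =>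
    abs_apply_le_of_scaledSchur ha hb'm (hSN i j)
  refine ⟨_, hC', ?_⟩
  rintro (_ | i) (_ | j) <;> simp [ham, hb'm, hC'N]

theorem exists_isCongruent_bordered_zero_bordered {R : Type*} [EuclideanDomain R]
    (b : Unit ⊕ κ → R) {C : Matrix (Unit ⊕ κ) (Unit ⊕ κ) R} (hC : C.IsSymm) :
    ∃ (g c : R) (u : κ → R) (E : Matrix κ κ R), E.IsSymm ∧
      IsCongruent (bordered 0 b C) (bordered 0 (Pi.single (.inl ()) g) (bordered c u E)) := by
  obtain ⟨P, g, hP, hg⟩ := exists_vecMul_eq_single b (.inl ())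
  have hPC : (Pᵀ * C * P).IsSymm := IsCongruent.isSymm ⟨P, hP, rfl⟩ hC
  have hcong := isCongruent_bordered_vecMul 0 b C hP
  rw [hg, eq_bordered hPC] at hcong
  exact ⟨g, _, _, _, hPC.submatrix _, hcong⟩

theorem hasReducedForm_bordered_zero {D N : ℤ} {b : Unit ⊕ κ → ℤ}
    {C : Matrix (Unit ⊕ κ) (Unit ⊕ κ) ℤ} (hN : IsReductionBound (Fintype.card κ) D N)
    (hC : C.IsSymm) (hdet : (bordered 0 b C).det ≠ 0) (hD : |(bordered 0 b C).det| ≤ D) :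
    HasReducedForm (max D N) (bordered 0 b C) := by
  obtain ⟨g, c, u, E, hE, hcong⟩ := exists_isCongruent_bordered_zero_bordered b hC
  rw [← hcong.det_eq, det_bordered_zero_bordered] at hdet hD
  obtain ⟨hg, hEdet⟩ : g ≠ 0 ∧ E.det ≠ 0 := by simpa using hdet
  have hg1 : 1 ≤ |g| := Int.one_le_abs hg
  rw [abs_neg, abs_mul, abs_pow] at hD
  have hgD : |g| ≤ D :=
    ((le_self_pow₀ hg1 two_ne_zero).trans
      (le_mul_of_one_le_right (by positivity) (Int.one_le_abs hEdet))).trans hD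
  have hED : |E.det| ≤ D :=
    (le_mul_of_one_le_left (abs_nonneg _) (one_le_pow₀ hg1)).trans hD
  obtain ⟨_, ⟨Q, hQ, rfl⟩, hEN⟩ := hN.hasReducedForm hE hEdet hED
  obtain ⟨s, hs⟩ := exists_two_mul_abs_add_mul_le (mul_ne_zero two_ne_zero hg) c
  choose t ht using fun j => exists_two_mul_abs_add_mul_le hg ((u ᵥ* Q) j)
  have hcD : |c + 2 * g * s| ≤ D := by
    rw [abs_mul, abs_two] at hs
    linarith
  have huD : ∀ j, |(u ᵥ* Q) j + g * t j| ≤ D := fun j => by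
    linarith [ht j, abs_nonneg ((u ᵥ* Q) j + g * t j)]
  have hD0 : 0 ≤ D := (abs_nonneg g).trans hgD
  refine .of_isCongruent (hcong.trans (isCongruent_bordered_zero_bordered_vecMul g c u E hQ))
    ⟨_, isCongruent_bordered_zero_bordered_add g c s (u ᵥ* Q) t _, ?_⟩
  rintro (_ | _ | i) (_ | _ | j) <;> simp [hD0, hgD, hcD, huD, hEN]

theorem exists_isReductionBound (n : ℕ) (D : ℤ) : ∃ N, IsReductionBound n D N := by
  induction n using Nat.strong_induction_on generalizing D with
  | h n ih => match n with
    | 0 => exact ⟨0, fun A _ _ _ => ⟨A, .refl A, by simp⟩⟩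
    | 1 => exact ⟨D, fun A _ _ hD => ⟨A, .refl A, by simpa [Fin.forall_fin_one] using hD⟩⟩
    | n + 2 =>
      let m := 4 ^ (n + 2).choose 2 * D
      obtain ⟨N, hN⟩ := ih n (by omega) D
      obtain ⟨N', hN'⟩ := ih (n + 1) (by omega) (D * m ^ (n + 1))
      refine ⟨max (max D N) (max m (N' + m ^ 2)), fun A hA hdet hD => ?_⟩
      obtain ⟨B, hAB, i, hBi⟩ := exists_isCongruent_abs_diag_le hA
      have hBm : |B i i| ≤ m := hBi.trans (by dsimp only [m]; gcongr)
      refine .of_isCongruent hAB ?_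
      rw [← hAB.det_eq] at hdet hD
      have hB := hAB.isSymm hA
      rcases eq_or_ne (B i i) 0 with hzero | hne
      · obtain ⟨e, b, C, hC, he⟩ :=
          exists_submatrix_eq_bordered (κ := Unit ⊕ Fin n) hB i (by simp; omega)
        rw [← det_submatrix_equiv_self e, he, hzero] at hdet hD
        refine .of_submatrix e (.mono (le_max_left _ _) ?_)
        rw [he, hzero]
        exact hasReducedForm_bordered_zero (by simpa using hN) hC hdet hD
      · obtain ⟨e, b, C, hC, he⟩ :=
          exists_submatrix_eq_bordered (κ := Fin (n + 1)) hB i (by simp)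
        rw [← det_submatrix_equiv_self e, he] at hdet hD
        refine .of_submatrix e (.mono (le_max_right _ _) ?_)
        rw [he]
        exact hasReducedForm_bordered (by simpa using hN') hC hne hBm hdet hD

theorem exists_finset_isCongruent (D : ℤ) :
    ∃ R : Finset (ι → ι → ℤ), ∀ A : Matrix ι ι ℤ, A.IsSymm → A.det ≠ 0 → |A.det| ≤ D →
      ∃ B ∈ R, IsCongruent A (of B) := by
  obtain ⟨N, hN⟩ := exists_isReductionBound (Fintype.card ι) D
  refine ⟨Fintype.piFinset fun _ => Fintype.piFinset fun _ => Finset.Icc (-N) N,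
    fun A hA hdet hD => ?_⟩
  obtain ⟨B, hAB, hB⟩ := hN.hasReducedForm hA hdet hD
  exact ⟨of.symm B, by simpa [Fintype.mem_piFinset, abs_le] using hB, hAB⟩

end ReducedForm

section IntArithmetic

open Encodable

theorem encode_int_natCast (n : ℕ) : encode (n : ℤ) = 2 * n :=
  rfl

theorem encode_int_negSucc (n : ℕ) : encode (Int.negSucc n) = 2 * n + 1 :=
  rfl

theorem primrec_int_toNat : Primrec Int.toNat := by
  have h : Primrec fun z : ℤ => if encode z % 2 = 0 then encode z / 2 else 0 :=
    .ite (Primrec.eq.comp (Primrec.nat_mod.comp .encode (.const 2)) (.const 0))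
      (Primrec.nat_div.comp .encode (.const 2)) (.const 0)
  refine h.of_eq fun z => ?_
  rcases z with n | n
  · simp [encode_int_natCast]
  · simp [encode_int_negSucc]

theorem primrec_int_neg_toNat : Primrec fun z : ℤ => (-z).toNat := by
  have h : Primrec fun z : ℤ => if encode z % 2 = 0 then 0 else encode z / 2 + 1 :=
    .ite (Primrec.eq.comp (Primrec.nat_mod.comp .encode (.const 2)) (.const 0)) (.const 0)
      (Primrec.succ.comp (Primrec.nat_div.comp .encode (.const 2)))
  refine h.of_eq fun z => ?_
  rcases z with n | n
  · simp [encode_int_natCast]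
  · rw [encode_int_negSucc, if_neg (by omega), Int.neg_negSucc]
    omega

theorem primrec₂_natCast_sub : Primrec₂ fun a b : ℕ => (a : ℤ) - b := by
  refine Primrec₂.encode_iff.1 ?_
  have h : Primrec₂ fun a b : ℕ => if b ≤ a then 2 * (a - b) else 2 * (b - a - 1) + 1 :=
    .ite (Primrec.nat_le.comp .snd .fst)
      (Primrec.nat_mul.comp (.const 2) (Primrec.nat_sub.comp .fst .snd))
      (Primrec.succ.comp (Primrec.nat_mul.comp (.const 2)
        (Primrec.nat_sub.comp (Primrec.nat_sub.comp .snd .fst) (.const 1))))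
  refine h.of_eq fun a b => ?_
  split_ifs with hab
  · rw [← Nat.cast_sub hab, encode_int_natCast]
  · rw [show (a : ℤ) - b = Int.negSucc (b - a - 1) by omega, encode_int_negSucc]

theorem primrec₂_int_add : Primrec₂ fun a b : ℤ => a + b := by
  refine (primrec₂_natCast_sub.comp
    (Primrec.nat_add.comp (primrec_int_toNat.comp .fst) (primrec_int_toNat.comp .snd))
    (Primrec.nat_add.comp (primrec_int_neg_toNat.comp .fst)
      (primrec_int_neg_toNat.comp .snd))).of_eq fun p => ?_
  dsimp only
  omega

theorem primrec₂_int_mul : Primrec₂ fun a b : ℤ => a * b := by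
  have hpos₁ := primrec_int_toNat.comp (.fst (α := ℤ) (β := ℤ))
  have hpos₂ := primrec_int_toNat.comp (.snd (α := ℤ) (β := ℤ))
  have hneg₁ := primrec_int_neg_toNat.comp (.fst (α := ℤ) (β := ℤ))
  have hneg₂ := primrec_int_neg_toNat.comp (.snd (α := ℤ) (β := ℤ))
  refine (primrec₂_natCast_sub.comp
    (Primrec.nat_add.comp (Primrec.nat_mul.comp hpos₁ hpos₂) (Primrec.nat_mul.comp hneg₁ hneg₂))
    (Primrec.nat_add.comp (Primrec.nat_mul.comp hpos₁ hneg₂)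
      (Primrec.nat_mul.comp hneg₁ hpos₂))).of_eq fun p => ?_
  conv_rhs => rw [← Int.toNat_sub_toNat_neg p.1, ← Int.toNat_sub_toNat_neg p.2]
  push_cast
  ring

theorem primrec_int_natAbs : Primrec Int.natAbs :=
  (Primrec.nat_add.comp primrec_int_toNat primrec_int_neg_toNat).of_eq fun z => by omega

variable {α ι : Type*} [Primcodable α]

theorem primrec_int_finset_sum (s : Finset ι) {f : ι → α → ℤ} (hf : ∀ i, Primrec (f i)) :
    Primrec fun x => ∑ i ∈ s, f i x := by
  rw [← Finset.sum_fn]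
  exact Finset.sum_induction f Primrec (fun _ _ hg hh => primrec₂_int_add.comp hg hh)
    (.const 0) fun i _ => hf i

theorem primrec_int_finset_prod (s : Finset ι) {f : ι → α → ℤ} (hf : ∀ i, Primrec (f i)) :
    Primrec fun x => ∏ i ∈ s, f i x := by
  rw [← Finset.prod_fn]
  exact Finset.prod_induction f Primrec (fun _ _ hg hh => primrec₂_int_mul.comp hg hh)
    (.const 1) fun i _ => hf i

theorem primrecPred_forall_finset (s : Finset ι) {p : ι → α → Prop}
    (hp : ∀ i, PrimrecPred (p i)) : PrimrecPred fun x => ∀ i ∈ s, p i x := by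
  classical
  induction s using Finset.induction_on with
  | empty => exact (Primrec.eq.comp (.const 0) (.const 0)).of_eq (by simp)
  | insert i s _ ih => exact ((hp i).and ih).of_eq (by simp)

end IntArithmetic

section MatrixArithmetic

variable {α l m n : Type*} [Primcodable α]

/-- Primitive recursiveness of a matrix-valued function, entry by entry; the index types need no
encoding. -/
def PrimrecEntries (f : α → Matrix m n ℤ) : Prop :=
  ∀ i j, Primrec fun x => f x i j

namespace PrimrecEntries

theorem of {r : ℕ} {f : α → Fin r → Fin r → ℤ} (hf : Primrec f) :
    PrimrecEntries fun x => Matrix.of (f x) := fun i j =>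
  Primrec.fin_app.comp (Primrec.fin_app.comp hf (.const i)) (.const j)

theorem transpose {f : α → Matrix m n ℤ} (hf : PrimrecEntries f) :
    PrimrecEntries fun x => (f x)ᵀ := fun i j =>
  hf j i

theorem mul [Fintype m] {f : α → Matrix l m ℤ} {g : α → Matrix m n ℤ} (hf : PrimrecEntries f)
    (hg : PrimrecEntries g) : PrimrecEntries fun x => f x * g x := fun i j =>
  primrec_int_finset_sum _ fun k => primrec₂_int_mul.comp (hf i k) (hg k j)

theorem eq [Finite m] [Finite n] {f g : α → Matrix m n ℤ} (hf : PrimrecEntries f)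
    (hg : PrimrecEntries g) : PrimrecPred fun x => f x = g x := by
  have := Fintype.ofFinite m
  have := Fintype.ofFinite n
  exact (primrecPred_forall_finset .univ fun i => primrecPred_forall_finset .univ fun j =>
    Primrec.eq.comp (hf i j) (hg i j)).of_eq fun x => by simp [← Matrix.ext_iff]

theorem det [Fintype m] [DecidableEq m] {f : α → Matrix m m ℤ} (hf : PrimrecEntries f) :
    Primrec fun x => (f x).det := by
  simp only [det_apply']
  exact primrec_int_finset_sum _ fun σ =>
    primrec₂_int_mul.comp (.const _) (primrec_int_finset_prod _ fun i => hf _ _)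

theorem natAbs_det_eq [Fintype m] [DecidableEq m] {f : α → Matrix m m ℤ} (hf : PrimrecEntries f)
    (d : ℕ) : PrimrecPred fun x => (f x).det.natAbs = d :=
  Primrec.eq.comp (primrec_int_natAbs.comp hf.det) (.const d)

end PrimrecEntries

end MatrixArithmetic

section REPred

variable {α β : Type*} [Primcodable α] [Primcodable β]

theorem rePred_exists {p : α → β → Prop} (hp : ComputablePred fun x : α × β => p x.1 x.2) :
    REPred fun a => ∃ b, p a b := by
  obtain ⟨f, hf, hpf⟩ := ComputablePred.computable_iff.1 hp
  have hp_iff (a : α) (b : β) : p a b ↔ f (a, b) := (congrFun hpf (a, b)).to_iff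
  have htest : Computable₂ fun (x : α × ℕ) (b : β) => bif f (x.1, b) then some () else none :=
    .cond (hf.comp (.pair (Computable.fst.comp .fst) .snd)) (.const _) (.const _)
  have hsearch : Computable₂ fun (a : α) (n : ℕ) =>
      (Encodable.decode n : Option β).bind fun b => bif f (a, b) then some () else none :=
    .option_bind (Computable.decode.comp .snd) htest
  refine (Partrec.rfindOpt hsearch).dom_re.of_eq fun a => ?_
  rw [Nat.rfindOpt_dom]
  constructor
  · rintro ⟨n, u, h⟩
    obtain ⟨b, -, hb⟩ := Option.bind_eq_some_iff.1 h
    exact ⟨b, (hp_iff a b).2 <| by_contra fun hf => by simp [hf] at hb⟩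
  · rintro ⟨b, hb⟩
    exact ⟨Encodable.encode b, (), by simp [(hp_iff a b).1 hb]⟩

theorem rePred_comp {p : β → Prop} (hp : REPred p) {f : α → β} (hf : Computable f) :
    REPred fun a => p (f a) :=
  Partrec.comp hp hf

theorem rePred_and {p q : α → Prop} (hp : REPred p) (hq : REPred q) :
    REPred fun a => p a ∧ q a :=
  (Partrec.bind hp (rePred_comp hq .fst).to₂).dom_re.of_eq fun a => by simp [Part.assert]

theorem rePred_or {p q : α → Prop} (hp : REPred p) (hq : REPred q) :
    REPred fun a => p a ∨ q a := by
  obtain ⟨k, hk, hdom⟩ := Partrec.merge' hp hq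
  exact hk.dom_re.of_eq fun a => by simpa [Part.assert] using (hdom a).2

theorem rePred_exists_mem_finset {ι : Type*} (s : Finset ι) {p : ι → α → Prop}
    (hp : ∀ i, REPred (p i)) : REPred fun a => ∃ i ∈ s, p i a := by
  classical
  induction s using Finset.induction_on with
  | empty => exact (Partrec.none (σ := Unit)).dom_re.of_eq (by simp)
  | insert i s _ ih => exact (rePred_or (hp i) ih).of_eq (by simp)

theorem computablePred_of_finite_representatives {r : α → α → Prop} (hr : Equivalence r)
    (hre : REPred fun p : α × α => r p.1 p.2) {s : α → Prop} (hs : ComputablePred s)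
    (R : Finset α) (hR : ∀ a, s a → ∃ b ∈ R, r a b) :
    ComputablePred fun p : α × α => s p.1 ∧ s p.2 ∧ r p.1 p.2 := by
  classical
  refine ComputablePred.computable_iff_re_compl_re'.2 ⟨?_, ?_⟩
  · exact rePred_and (rePred_comp hs.to_re .fst) (rePred_and (rePred_comp hs.to_re .snd) hre)
  let T : Finset (α × α) := (R ×ˢ R).filter fun q => ¬ r q.1 q.2
  have hsep : REPred fun p : α × α => ∃ q ∈ T, r p.1 q.1 ∧ r p.2 q.2 :=
    rePred_exists_mem_finset T fun q =>
      rePred_and (rePred_comp hre (.pair .fst (.const q.1)))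
        (rePred_comp hre (.pair .snd (.const q.2)))
  refine (rePred_or (rePred_comp hs.not.to_re .fst)
    (rePred_or (rePred_comp hs.not.to_re .snd) hsep)).of_eq fun ⟨a, b⟩ => ?_
  constructor
  · rintro (ha | hb | ⟨⟨c, d⟩, hcd, hac, hbd⟩) ⟨hsa, hsb, hab⟩
    · exact ha hsa
    · exact hb hsb
    · exact (Finset.mem_filter.1 hcd).2 (hr.trans (hr.symm hac) (hr.trans hab hbd))
  · refine fun h => or_iff_not_imp_left.2 fun ha => or_iff_not_imp_left.2 fun hb => ?_
    obtain ⟨c, hcR, hac⟩ := hR a (not_not.1 ha)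
    obtain ⟨d, hdR, hbd⟩ := hR b (not_not.1 hb)
    have hcd : ¬ r c d := fun hcd =>
      h ⟨not_not.1 ha, not_not.1 hb, hr.trans hac (hr.trans hcd (hr.symm hbd))⟩
    exact ⟨(c, d), Finset.mem_filter.2 ⟨Finset.mk_mem_product hcR hdR, hcd⟩, hac, hbd⟩

end REPred

theorem rePred_isCongruent (m : ℕ) :
    REPred fun p : (Fin m → Fin m → ℤ) × (Fin m → Fin m → ℤ) =>
      IsCongruent (of p.1) (of p.2) := by
  let α := Fin m → Fin m → ℤ
  have hA : PrimrecEntries fun x : (α × α) × α => of x.1.1 := .of (Primrec.fst.comp .fst)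
  have hB : PrimrecEntries fun x : (α × α) × α => of x.1.2 := .of (Primrec.snd.comp .fst)
  have hP : PrimrecEntries fun x : (α × α) × α => of x.2 := .of .snd
  have hcong : REPred fun p : α × α =>
      ∃ P : α, (of P).det.natAbs = 1 ∧ of p.2 = (of P)ᵀ * of p.1 * of P :=
    rePred_exists ((hP.natAbs_det_eq 1).and
      (hB.eq ((hP.transpose.mul hA).mul hP))).computablePred
  refine hcong.of_eq fun p => ?_
  simp only [IsCongruent, Int.isUnit_iff_natAbs_eq]
  rfl

theorem computablePred_isSymm_and_natAbs_det_eq (m d : ℕ) :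
    ComputablePred fun A : Fin m → Fin m → ℤ => (of A).IsSymm ∧ (of A).det.natAbs = d :=
  have hA := PrimrecEntries.of (.id (α := Fin m → Fin m → ℤ))
  ((hA.transpose.eq hA).and (hA.natAbs_det_eq d)).computablePred

theorem computablePred_congruent_general (m : ℕ) {d : ℕ} (hd : d ≠ 0) :
    ComputablePred fun p : (Fin m → Fin m → ℤ) × (Fin m → Fin m → ℤ) =>
      (of p.1).IsSymm ∧ (of p.2).IsSymm ∧
      (of p.1).det.natAbs = d ∧ (of p.2).det.natAbs = d ∧
      ∃ P : Matrix (Fin m) (Fin m) ℤ, IsUnit P.det ∧ of p.2 = Pᵀ * of p.1 * P := by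
  obtain ⟨R, hR⟩ := exists_finset_isCongruent (ι := Fin m) d
  refine (computablePred_of_finite_representatives (IsCongruent.equivalence.comap of)
    (rePred_isCongruent m) (computablePred_isSymm_and_natAbs_det_eq m d) R ?_).of_eq fun p => ?_
  · rintro A ⟨hA, rfl⟩
    exact hR (of A) hA (Int.natAbs_ne_zero.1 hd) (Int.abs_eq_natAbs _).le
  · simp only [IsCongruent, Function.onFun, and_assoc, and_left_comm]

/-- The predicate "two integer matrices are symmetric, unimodular, and congruent
over `ℤ`" is computably decidable. -/
theorem computablePred_congruent (m : ℕ) :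
    ComputablePred fun p : (Fin m → Fin m → ℤ) × (Fin m → Fin m → ℤ) =>
      (Matrix.of p.1).IsSymm ∧ (Matrix.of p.2).IsSymm ∧
      IsUnit (Matrix.of p.1).det ∧ IsUnit (Matrix.of p.2).det ∧
      ∃ P : Matrix (Fin m) (Fin m) ℤ, IsUnit P.det ∧
        Matrix.of p.2 = Pᵀ * Matrix.of p.1 * P := by
  simpa only [Int.isUnit_iff_natAbs_eq] using computablePred_congruent_general m one_ne_zero
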